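/- Let Λ = O[[T]] and let f ∈ Λ be nonzero, and let A ⊆ Λ be an ideal of finite index with fΛ ⊆ A. Then from the exact sequence 0 → A/fΛ → Λ/fΛ → Λ/A → 0 and the finiteness of Λ/A, the localizations (A/fΛ)_𝔭 and (Λ/fΛ)_𝔭 at every height-one prime 𝔭 of Λ are isomorphic, and consequently Fitt_Λ(A/fΛ) = fΛ. -/

import Mathlib

/-!
Write `T` for the variable of `Λ ≅ O⟦X⟧`. Then `T` is a prime element in the Jacobson radical and
`Λ / T ≅ O` is a principal ideal domain. Since `Λ / A` is finite, `A` contains a power of `T` and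
an element `P` not divisible by `T`, namely the integer `|Λ / A|`; a height-one prime contains at
most one of the two, because one containing `T` equals `(T)`. So some `s ∈ A` becomes invertible
at `𝔭`, and as `s` annihilates `Λ / A`, the inclusion `A/f → Λ/f` becomes an isomorphism there.

For the Fitting ideal, the global input is the regular sequence `P, T ^ k` (`dvd_of_dvd_pow`)
instead of localization.

* `Fitt ⊆ (f)` (`fitting_le`): the determinant `d` of a square relation matrix annihilates `A/f`,
  so `f` divides `d P` and `d T ^ k`, hence `d`.
* `f ∈ Fitt` (`le_fitting`): the kernel of a surjection `π : Λⁿ → A` is free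
  (`basis_of_saturated`), of rank `n - 1`. Put a basis of it below a row `w` in a square matrix.
  As in the Hilbert–Burch theorem, its determinant `φ w` depends only on `π w`, so `φ = g · π` for
  some `g`, and `φ w` divides `(π w) ^ n` because `π w` annihilates the cokernel. Taking
  `π w = P, T ^ k` shows that `g` is a unit, and taking `π w = f` exhibits `g f` as the determinant
  of a relation matrix of `A/f`.
-/

/-- The 0-th Fitting ideal of a module `M` over a commutative ring `R`. -/
def fittingIdeal (R : Type*) [CommRing R] (M : Type*) [AddCommGroup M] [Module R M] :
    Ideal R :=
  Ideal.span { d : R | ∃ (n : ℕ) (π : ((Fin n → R) →ₗ[R] M))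
    (A : Matrix (Fin n) (Fin n) R),
      Function.Surjective π ∧ (∀ i, π (A i) = 0) ∧ d = A.det }

/-! ### Freeness of the syzygy module -/

/-- A submodule `N` of `Rⁿ` such that `Rⁿ / N` has no `T`-torsion is free: its reduction modulo `T`
embeds into `(R / T)ⁿ`, where submodules are free, and a lift of a basis of the reduction is a
basis of `N`: it spans by Nakayama, and it is independent because the coefficients of a relation are
divisible by every power of `T`. -/
theorem basis_of_saturated {R : Type*} [CommRing R] [IsDomain R] [IsNoetherianRing R]
    {T : R} (hT : Prime T) (hTj : T ∈ Ideal.jacobson (⊥ : Ideal R))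
    (hpid : IsPrincipalIdealRing (R ⧸ Ideal.span {T}))
    {n : ℕ} (N : Submodule R (Fin n → R)) (hN : ∀ x, T • x ∈ N → x ∈ N) :
    ∃ r : ℕ, Nonempty (Module.Basis (Fin r) R N) := by
  have hprime : (Ideal.span {T}).IsPrime := (Ideal.span_singleton_prime hT.ne_zero).2 hT
  let red : (Fin n → R) →ₛₗ[Ideal.Quotient.mk (Ideal.span {T})]
      (Fin n → R ⧸ Ideal.span {T}) :=
    { toFun := fun x i => Ideal.Quotient.mk _ (x i)
      map_add' := fun x y => by ext i; simp
      map_smul' := fun c x => by ext i; simp }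
  -- With `hN`, this says that the kernel of `red` on `N` is `T • N`.
  have hred : ∀ x, red x = 0 → ∃ y, x = T • y := by
    intro x hx
    have h : ∀ i, T ∣ x i := fun i =>
      Ideal.mem_span_singleton.1 (Ideal.Quotient.eq_zero_iff_mem.1 (congrFun hx i))
    choose y hy using h
    exact ⟨y, funext hy⟩
  have : RingHomSurjective (Ideal.Quotient.mk (Ideal.span {T})) :=
    ⟨Ideal.Quotient.mk_surjective⟩
  obtain ⟨r, ⟨b⟩⟩ := Submodule.nonempty_basis_of_pid
    (Pi.basisFun (R ⧸ Ideal.span {T}) (Fin n)) (N.map red)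
  have hb : ∀ i, ∃ x ∈ N, red x = b i := fun i => Submodule.mem_map.1 (b i).2
  choose k hkN hk using hb
  have hsum : ∀ c : Fin r → R, red (∑ i, c i • k i) =
      ((∑ i, Ideal.Quotient.mk (Ideal.span {T}) (c i) • b i : N.map red) : Fin n → _) := by
    intro c
    simp [map_sum, LinearMap.map_smulₛₗ, hk]
  refine ⟨r, ⟨Module.Basis.mk (v := fun i => (⟨k i, hkN i⟩ : N)) ?_ ?_⟩⟩
  · rw [Fintype.linearIndependent_iff]
    -- A relation has all its coefficients divisible by `T`; dividing and repeating,
    -- they are divisible by every power of `T`.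
    have key : ∀ m : ℕ, ∀ c : Fin r → R, ∑ i, c i • k i = 0 → ∀ i, T ^ m ∣ c i := by
      intro m
      induction m with
      | zero => intro c _ i; simp
      | succ m ih =>
        intro c hc
        have h0 : ∑ i, Ideal.Quotient.mk (Ideal.span {T}) (c i) • b i = 0 := by
          apply Subtype.ext
          rw [← hsum, hc]; simp
        have h1 : ∀ i, T ∣ c i := fun i =>
          Ideal.mem_span_singleton.1 (Ideal.Quotient.eq_zero_iff_mem.1
            (Fintype.linearIndependent_iff.1 b.linearIndependent _ h0 i))
        choose d hd using h1
        have h2 : ∑ i, d i • k i = 0 := by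
          have : T • ∑ i, d i • k i = 0 := by
            rw [← hc, Finset.smul_sum]
            exact Finset.sum_congr rfl fun i _ => by rw [smul_smul, ← hd]
          exact (smul_eq_zero.1 this).resolve_left hT.ne_zero
        intro i
        rw [hd i, pow_succ']
        exact mul_dvd_mul_left _ (ih d h2 i)
    intro c hc i
    by_contra hci
    obtain ⟨m, hm⟩ := FiniteMultiplicity.of_not_isUnit hT.not_isUnit hci
    refine hm (key (m + 1) c ?_ i)
    simpa using congrArg N.subtype hc
  · have h1 : N ≤ Submodule.span R (Set.range k) := by
      refine Submodule.le_of_le_smul_of_le_jacobson_bot (I := Ideal.span {T})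
        (IsNoetherian.noetherian N) ((Ideal.span_singleton_le_iff_mem _).2 hTj) ?_
      intro x hx
      let x' : N.map red := ⟨red x, Submodule.mem_map_of_mem hx⟩
      choose c hc using fun i => Ideal.Quotient.mk_surjective (b.repr x' i)
      have h2 : red (x - ∑ i, c i • k i) = 0 := by
        rw [map_sub, hsum, sub_eq_zero]
        simp only [hc, b.sum_repr]
        rfl
      obtain ⟨y, hy⟩ := hred _ h2
      have hyN : y ∈ N := hN y (hy ▸ N.sub_mem hx
        (N.sum_mem fun i _ => N.smul_mem _ (hkN i)))
      rw [sub_eq_iff_eq_add'] at hy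
      rw [hy]
      exact Submodule.add_mem_sup
        (Submodule.sum_mem _ fun i _ => Submodule.smul_mem _ _ (Submodule.subset_span ⟨i, rfl⟩))
        (Submodule.smul_mem_smul (Ideal.mem_span_singleton_self T) hyN)
    rintro ⟨x, hx⟩ -
    have h3 : Submodule.map N.subtype
        (Submodule.span R (Set.range fun i => (⟨k i, hkN i⟩ : N))) =
        Submodule.span R (Set.range k) := by
      rw [Submodule.map_span, ← Set.range_comp]; rfl
    obtain ⟨y, hy, hyx⟩ := h3 ▸ h1 hx
    have : y = ⟨x, hx⟩ := Subtype.ext hyx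
    exact this ▸ hy

/-! ### The Fitting ideal -/

/-- The regular sequence property of `P, T ^ k`: the power of `T` is a nonzerodivisor modulo
`P`. -/
theorem dvd_of_dvd_pow {R : Type*} [CommRing R] [IsDomain R] {T P : R} (hT : Prime T)
    (hTP : ¬ T ∣ P) {k : ℕ} {x : R} (h : P ∣ T ^ k * x) : P ∣ x := by
  obtain ⟨c, hc⟩ := h
  obtain ⟨d, rfl⟩ := hT.pow_dvd_of_dvd_mul_left k hTP ⟨x, hc.symm⟩
  refine ⟨d, mul_left_cancel₀ (pow_ne_zero k hT.ne_zero) ?_⟩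
  rw [hc]; ring

/-- Uses only that `A` contains a regular sequence `P, T ^ k`; `f ∈ A` is not assumed, and
`comap A.subtype (f)` then stands for `A ∩ (f)`. -/
theorem fitting_le {R : Type*} [CommRing R] [IsDomain R]
    {T P f : R} (hT : Prime T) (hTP : ¬ T ∣ P) {k : ℕ} {A : Ideal R} (hf : f ≠ 0)
    (hP : P ∈ A) (hTA : T ^ k ∈ A) :
    fittingIdeal R (A ⧸ Submodule.comap A.subtype (Ideal.span {f})) ≤ Ideal.span {f} := by
  refine Ideal.span_le.2 ?_
  rintro d ⟨n, π, B, hπ, hB, rfl⟩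
  -- By Cramer's rule the determinant of a square matrix of relations annihilates `A / f`.
  have hann : ∀ α ∈ A, f ∣ B.det * α := by
    intro α hα
    have h1 : ∀ j, B.det • π (Pi.single j 1) = 0 := by
      intro j
      rw [← map_smul]
      have : B.det • (Pi.single j 1 : Fin n → R) = ∑ i, B.adjugate j i • B i := by
        have h := congrFun (Matrix.adjugate_mul B) j
        ext l
        have h' := congrFun h l
        rw [Matrix.mul_apply] at h'
        simp only [Finset.sum_apply, Pi.smul_apply, smul_eq_mul]
        rw [h']
        simp [Matrix.one_apply, Pi.single_apply, eq_comm]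
      rw [this, map_sum]
      exact Finset.sum_eq_zero fun i _ => by rw [map_smul, hB, smul_zero]
    have h2 : ∀ y, B.det • π y = 0 := by
      intro y
      have : y = ∑ j, y j • (Pi.single j 1 : Fin n → R) := by
        ext l; simp [Finset.sum_apply, Pi.single_apply]
      rw [this, map_sum, Finset.smul_sum]
      refine Finset.sum_eq_zero fun j _ => ?_
      rw [map_smul, smul_comm, h1, smul_zero]
    obtain ⟨y, hy⟩ := hπ (Submodule.Quotient.mk ⟨α, hα⟩)
    have h3 := h2 y
    rw [hy, ← Submodule.Quotient.mk_smul, Submodule.Quotient.mk_eq_zero] at h3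
    exact Ideal.mem_span_singleton.1 h3
  obtain ⟨g, hg⟩ := hann P hP
  obtain ⟨h, hh⟩ := hann _ hTA
  have : P ∣ T ^ k * g := ⟨h, mul_left_cancel₀ hf (by linear_combination P * hh - T ^ k * hg)⟩
  obtain ⟨c, rfl⟩ := dvd_of_dvd_pow hT hTP this
  have hP0 : P ≠ 0 := fun h => hTP (h ▸ dvd_zero T)
  exact Ideal.mem_span_singleton.2 ⟨c, mul_right_cancel₀ hP0 (by linear_combination hg)⟩

/-- The Hilbert–Burch half: a free resolution of `A` of length one gives a square presentation matrix
of `A / f` whose determinant is `f` up to a unit. -/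
theorem le_fitting {R : Type*} [CommRing R] [IsDomain R] [IsNoetherianRing R]
    {T P f : R} (hT : Prime T) (hTj : T ∈ Ideal.jacobson (⊥ : Ideal R))
    (hpid : IsPrincipalIdealRing (R ⧸ Ideal.span {T}))
    (hTP : ¬ T ∣ P) {k : ℕ} {A : Ideal R}
    (hP : P ∈ A) (hTA : T ^ k ∈ A) (hfA : Ideal.span {f} ≤ A) :
    Ideal.span {f} ≤ fittingIdeal R (A ⧸ Submodule.comap A.subtype (Ideal.span {f})) := by
  have hP0 : P ≠ 0 := fun h => hTP (h ▸ dvd_zero T)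
  have hf : f ∈ A := hfA (Ideal.mem_span_singleton_self f)
  obtain ⟨n, π, hπ⟩ := Module.Finite.exists_fin' R A
  obtain ⟨r, ⟨b⟩⟩ := basis_of_saturated hT hTj hpid (LinearMap.ker π) (by
    intro x hx
    rw [LinearMap.mem_ker, map_smul] at hx
    exact (smul_eq_zero.1 hx).resolve_left hT.ne_zero)
  -- `A` has rank one, since `P ≠ 0` annihilates `R / A`.
  have hn : n = r + 1 := by
    have h1 := Submodule.finrank_quotient_add_finrank (LinearMap.ker π)
    rw [(π.quotKerEquivOfSurjective hπ).finrank_eq, Module.finrank_eq_card_basis b] at h1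
    have h2 := Submodule.finrank_quotient_add_finrank A
    have h3 : Module.finrank R (R ⧸ A) = 0 := by
      rw [Module.finrank_eq_zero_iff_isTorsion]
      intro x
      refine ⟨⟨P, mem_nonZeroDivisors_of_ne_zero hP0⟩, ?_⟩
      obtain ⟨x, rfl⟩ := Ideal.Quotient.mk_surjective x
      change P • Ideal.Quotient.mk A x = 0
      rw [← Ideal.Quotient.mk_eq_mk, ← Submodule.Quotient.mk_smul, Submodule.Quotient.mk_eq_zero]
      exact A.mul_mem_right x hP
    simp at h1 h2
    omega
  subst hn
  let κ : Fin r → (Fin (r + 1) → R) := fun i => (b i : Fin (r + 1) → R)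
  have hκ : ∀ i, π (κ i) = 0 := fun i => (b i).2
  have hspan : ∀ x, π x = 0 → ∃ c : Fin r → R, x = ∑ i, c i • κ i := by
    intro x hx
    refine ⟨b.repr ⟨x, hx⟩, ?_⟩
    have := congrArg Subtype.val (b.sum_repr ⟨x, hx⟩)
    rw [Submodule.coe_sum] at this
    exact this.symm
  -- `φ w` is the determinant of the matrix with first row `w` and a basis of `ker π` below.
  let φ : (Fin (r + 1) → R) →ₗ[R] R :=
    { toFun := fun w => (Matrix.of (Matrix.vecCons w κ)).det
      map_add' := fun x y => (Matrix.detRowAlternating).map_vecCons_add κ x y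
      map_smul' := fun c x => (Matrix.detRowAlternating).map_vecCons_smul κ c x }
  have hφdef : ∀ w, φ w = (Matrix.of (Matrix.vecCons w κ)).det := fun _ => rfl
  have hφκ : ∀ i, φ (κ i) = 0 := by
    intro i
    refine Matrix.det_zero_of_row_eq (i := 0) (j := i.succ) (Fin.succ_ne_zero i).symm ?_
    ext j; simp
  have hφ : ∀ x, π x = 0 → φ x = 0 := by
    intro x hx
    obtain ⟨c, rfl⟩ := hspan x hx
    simp [map_sum, hφκ]
  have hcomm : ∀ x y, φ x * (π y : R) = φ y * (π x : R) := by
    intro x y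
    have : φ ((π y : R) • x - (π x : R) • y) = 0 := by
      apply hφ
      apply Subtype.ext
      simp [mul_comm]
    rw [map_sub, map_smul, map_smul, smul_eq_mul, smul_eq_mul] at this
    linear_combination this
  -- `π w • Rⁿ` lies in the row space of the matrix defining `φ w`: subtract a multiple of `w`
  -- to land in `ker π`.
  have hdvd : ∀ w, φ w ∣ (π w : R) ^ (r + 1) := by
    intro w
    have h : ∀ j, ∃ c : Fin (r + 1) → R,
        (π w : R) • (Pi.single j 1 : Fin (r + 1) → R) =
          ∑ i, c i • Matrix.vecCons w κ i := by
      intro j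
      obtain ⟨c, hc⟩ := hspan ((π w : R) • (Pi.single j 1 : Fin (r + 1) → R) -
        (π (Pi.single j 1) : R) • w) (by apply Subtype.ext; simp [mul_comm])
      refine ⟨Fin.cons (π (Pi.single j 1) : R) c, ?_⟩
      rw [Fin.sum_univ_succ]
      simp only [Fin.cons_zero, Fin.cons_succ, Matrix.cons_val_zero, Matrix.cons_val_succ]
      rw [← hc]; abel
    choose C hC using h
    have hmat : (π w : R) • (1 : Matrix (Fin (r + 1)) (Fin (r + 1)) R) =
        Matrix.of C * Matrix.of (Matrix.vecCons w κ) := by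
      ext j l
      have := congrFun (hC j) l
      rw [Matrix.mul_apply]
      simp only [Finset.sum_apply, Pi.smul_apply, smul_eq_mul] at this
      simp only [Matrix.of_apply]
      rw [← this]
      simp [Matrix.one_apply, Pi.single_apply, eq_comm]
    have := congrArg Matrix.det hmat
    rw [Matrix.det_smul, Matrix.det_one, mul_one, Fintype.card_fin, Matrix.det_mul] at this
    rw [this, hφdef]
    exact dvd_mul_left _ _
  obtain ⟨wP, hwP⟩ := hπ ⟨P, hP⟩
  obtain ⟨wQ, hwQ⟩ := hπ ⟨T ^ k, hTA⟩
  obtain ⟨wf, hwf⟩ := hπ ⟨f, hf⟩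
  have hPQ := hcomm wP wQ
  have hPf := hcomm wP wf
  have hdP := hdvd wP
  have hdQ := hdvd wQ
  simp only [hwP, hwQ, hwf] at hPQ hPf hdP hdQ
  obtain ⟨g, hg⟩ : P ∣ φ wP :=
    dvd_of_dvd_pow hT hTP (k := k) ⟨φ wQ, by linear_combination hPQ⟩
  have hgQ : φ wQ = T ^ k * g :=
    mul_right_cancel₀ hP0 (by linear_combination -hPQ + T ^ k * hg)
  have hgf : φ wf = f * g :=
    mul_right_cancel₀ hP0 (by linear_combination -hPf + f * hg)
  -- `g` divides a power of `P` and a power of `T`, hence is a unit.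
  have hgu : IsUnit g := by
    obtain ⟨u, hu⟩ := (Dvd.intro_left _ hg.symm).trans hdP
    obtain ⟨v, hv⟩ := (Dvd.intro_left _ hgQ.symm).trans hdQ
    have hg0 : g ≠ 0 := by
      rintro rfl
      exact pow_ne_zero (r + 1) hP0 (by rw [hu, zero_mul])
    have hTP' : ¬ T ∣ P ^ (r + 1) := fun h => hTP (hT.dvd_of_dvd_pow h)
    obtain ⟨c, hc⟩ : P ^ (r + 1) ∣ u :=
      dvd_of_dvd_pow hT hTP' (k := k * (r + 1)) ⟨v, mul_left_cancel₀ hg0 (by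
        rw [pow_mul]
        linear_combination P ^ (r + 1) * hv - (T ^ k) ^ (r + 1) * hu)⟩
    refine IsUnit.of_mul_eq_one c
      (mul_left_cancel₀ (pow_ne_zero (r + 1) hP0) ?_)
    rw [mul_one]
    linear_combination -hu - g * hc
  rw [Ideal.span_singleton_le_iff_mem]
  have hmem : φ wf ∈ fittingIdeal R (A ⧸ Submodule.comap A.subtype (Ideal.span {f})) := by
    refine Ideal.subset_span ⟨r + 1, (Submodule.mkQ _).comp π,
      Matrix.of (Matrix.vecCons wf κ), (Submodule.mkQ_surjective _).comp hπ, ?_, rfl⟩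
    intro i
    rw [LinearMap.comp_apply, Submodule.mkQ_apply, Submodule.Quotient.mk_eq_zero]
    refine Fin.cases ?_ (fun i => ?_) i
    · change (π wf : R) ∈ Ideal.span {f}
      rw [hwf]
      exact Ideal.mem_span_singleton_self f
    · change (π (κ i) : R) ∈ Ideal.span {f}
      rw [hκ]
      exact Ideal.zero_mem _
  rw [hgf] at hmem
  exact (Ideal.mul_unit_mem_iff_mem _ hgu).1 hmem

/-! ### Localization at height-one primes -/

/-- The cokernel `R / A` of `A / f → R / f` is killed by `s`, which is invertible at `𝔭`. -/
theorem localization_iso {R : Type*} [CommRing R] {f s : R} {A 𝔭 : Ideal R} [𝔭.IsPrime]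
    (hs : s ∈ A) (hs𝔭 : s ∉ 𝔭) :
    Nonempty
      ((LocalizedModule 𝔭.primeCompl (A ⧸ (Submodule.comap A.subtype (Ideal.span {f})))) ≃ₗ[R]
        (LocalizedModule 𝔭.primeCompl (R ⧸ Ideal.span {f}))) := by
  let ι : (A ⧸ (Submodule.comap A.subtype (Ideal.span {f}))) →ₗ[R] (R ⧸ Ideal.span {f}) :=
    Submodule.mapQ _ _ A.subtype le_rfl
  have hι : Function.Injective ι := by
    rw [← LinearMap.ker_eq_bot]
    exact Submodule.ker_liftQ_eq_bot _ _ _ (by rw [LinearMap.ker_comp, Submodule.ker_mkQ])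
  let S := 𝔭.primeCompl
  let F := IsLocalizedModule.map S (LocalizedModule.mkLinearMap S _)
    (LocalizedModule.mkLinearMap S _) ι
  refine ⟨LinearEquiv.ofBijective F ⟨IsLocalizedModule.map_injective _ _ _ _ hι, ?_⟩⟩
  intro y
  obtain ⟨⟨y, t⟩, rfl⟩ := IsLocalizedModule.mk'_surjective S
    (LocalizedModule.mkLinearMap S _) y
  obtain ⟨y, rfl⟩ := Submodule.Quotient.mk_surjective _ y
  let s' : S := ⟨s, hs𝔭⟩
  let x : A ⧸ (Submodule.comap A.subtype (Ideal.span {f})) :=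
    Submodule.Quotient.mk ⟨s * y, A.mul_mem_right y hs⟩
  refine ⟨IsLocalizedModule.mk' (LocalizedModule.mkLinearMap S _) x (s' * t), ?_⟩
  rw [IsLocalizedModule.map_mk']
  exact IsLocalizedModule.mk'_cancel_left (LocalizedModule.mkLinearMap S _)
    (Submodule.Quotient.mk y) s' t

/-! ### Power series over the integers of a `p`-adic field -/

/-- A Dedekind domain finite over the local ring `ℤ_[p]` has finitely many maximal ideals, so it is
principal. -/
theorem pid_integers (p : ℕ) [Fact p.Prime] (K : Type*) [Field K]
    [Algebra ℚ_[p] K] [FiniteDimensional ℚ_[p] K]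
    [Algebra ℤ_[p] K] [IsScalarTower ℤ_[p] ℚ_[p] K] :
    IsPrincipalIdealRing (integralClosure ℤ_[p] K) := by
  have := integralClosure.isDedekindDomain ℤ_[p] ℚ_[p] K
  have hinj : Function.Injective (algebraMap ℤ_[p] K) := by
    rw [IsScalarTower.algebraMap_eq ℤ_[p] ℚ_[p] K]
    exact (algebraMap ℚ_[p] K).injective.comp (IsFractionRing.injective ℤ_[p] ℚ_[p])
  have : FaithfulSMul ℤ_[p] K := (faithfulSMul_iff_algebraMap_injective _ _).2 hinj
  have : Module.IsTorsionFree ℤ_[p] K := inferInstance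
  refine IsPrincipalIdealRing.of_finite_maximals ((IsDedekindDomain.primesOver_finite
    (IsLocalRing.maximalIdeal ℤ_[p]) (integralClosure ℤ_[p] K)).subset ?_)
  intro M hM
  have hM' : M.IsMaximal := hM
  refine ⟨hM'.isPrime, ⟨?_⟩⟩
  exact (IsLocalRing.eq_maximalIdeal (Ideal.isMaximal_comap_of_isIntegral_of_isMaximal M)).symm

open PowerSeries in
/-- The statement for power series over any principal ideal domain of characteristic zero. -/
theorem stmt_of_powerSeries {O R : Type*} [CommRing O] [IsDomain O] [IsPrincipalIdealRing O] [CharZero O]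
    [CommRing R] (e : R ≃+* O⟦X⟧) (f : R) (hf : f ≠ 0)
    (A : Ideal R) (hfA : Ideal.span {f} ≤ A) (hfin : Finite (R ⧸ A)) :
    (∀ (𝔭 : Ideal R) [𝔭.IsPrime], 𝔭 ≠ ⊥ →
        (∀ q : Ideal R, q.IsPrime → q < 𝔭 → q = ⊥) →
        Nonempty
          ((LocalizedModule 𝔭.primeCompl
              (↥A ⧸ (Submodule.comap A.subtype (Ideal.span {f})))) ≃ₗ[R]
            (LocalizedModule 𝔭.primeCompl (R ⧸ Ideal.span {f})))) ∧
      fittingIdeal R (↥A ⧸ (Submodule.comap A.subtype (Ideal.span {f}))) =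
        Ideal.span {f} := by
  have : IsDomain R := e.toMulEquiv.isDomain _
  have : IsNoetherianRing R := isNoetherianRing_of_ringEquiv _ e.symm
  obtain ⟨T, hTe⟩ := e.surjective X
  have hT : Prime T := (MulEquiv.prime_iff (e : R ≃* O⟦X⟧)).1 (by
    change Prime (e T)
    rw [hTe]; exact X_prime)
  have hunit : ∀ x : R, constantCoeff (e x) = 1 → IsUnit x := by
    intro x hx
    rw [← MulEquiv.isUnit_map e, isUnit_iff_constantCoeff, hx]
    exact isUnit_one
  have hTj : T ∈ Ideal.jacobson (⊥ : Ideal R) := by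
    rw [Ideal.mem_jacobson_bot]
    intro y
    exact hunit _ (by simp [hTe])
  have hpid : IsPrincipalIdealRing (R ⧸ Ideal.span {T}) := by
    refine IsPrincipalIdealRing.of_surjective ((Ideal.Quotient.mk (Ideal.span {T})).comp
      ((e.symm : O⟦X⟧ →+* R).comp (C (R := O)))) ?_
    intro x
    obtain ⟨x, rfl⟩ := Ideal.Quotient.mk_surjective x
    refine ⟨constantCoeff (e x), ?_⟩
    rw [RingHom.comp_apply, Ideal.Quotient.eq, Ideal.mem_span_singleton,
      ← map_dvd_iff e, hTe, X_dvd_iff]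
    simp
  -- The index of `A` lies in `A`, and is a nonzero constant.
  obtain ⟨P, hTP, hP⟩ : ∃ P, ¬ T ∣ P ∧ P ∈ A := by
    refine ⟨(Nat.card (R ⧸ A) : R), ?_, ?_⟩
    · rw [← map_dvd_iff e, hTe, X_dvd_iff]
      simp only [map_natCast]
      exact_mod_cast Nat.card_pos.ne'
    · rw [← Ideal.Quotient.eq_zero_iff_mem, map_natCast, ← nsmul_one]
      exact card_nsmul_eq_zero'
  obtain ⟨k, hTA⟩ : ∃ k, T ^ k ∈ A := by
    obtain ⟨i, j, hne, hij⟩ := Finite.exists_ne_map_eq_of_infinite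
      (fun i : ℕ => Ideal.Quotient.mk A (T ^ i))
    wlog hlt : i < j generalizing i j
    · exact this j i hne.symm hij.symm (by omega)
    refine ⟨i, ?_⟩
    obtain ⟨m, rfl⟩ := Nat.exists_eq_add_of_lt hlt
    -- `T ^ i * (1 - T ^ (m + 1)) ∈ A` by pigeonhole.
    have hu : IsUnit (1 - T ^ (m + 1)) := hunit _ (by simp [hTe])
    refine (Ideal.mul_unit_mem_iff_mem _ hu).1 ?_
    convert Ideal.Quotient.eq.1 hij using 1
    ring
  refine ⟨?_, le_antisymm (fitting_le hT hTP hf hP hTA)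
    (le_fitting hT hTj hpid hTP hP hTA hfA)⟩
  intro 𝔭 _ _ hmin
  by_cases hT𝔭 : T ∈ 𝔭
  · have hP𝔭 : P ∉ 𝔭 := by
      intro hP𝔭
      have hlt : Ideal.span {T} < 𝔭 := lt_of_le_of_ne
        ((Ideal.span_singleton_le_iff_mem _).2 hT𝔭)
        (fun h => hTP (Ideal.mem_span_singleton.1 (h ▸ hP𝔭)))
      exact hT.ne_zero (Ideal.span_singleton_eq_bot.1
        (hmin _ ((Ideal.span_singleton_prime hT.ne_zero).2 hT) hlt))
    exact localization_iso hP hP𝔭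
  · exact localization_iso hTA fun h => hT𝔭 (Ideal.IsPrime.mem_of_pow_mem ‹_› k h)

/-- Let `Λ = O[[T]]`, `f ∈ Λ` nonzero, and `A ⊆ Λ` an ideal of finite index with
`fΛ ⊆ A`.  Then at every height-one prime `𝔭` of `Λ` the localizations of `A/fΛ`
and `Λ/fΛ` are isomorphic, and `Fitt_Λ(A/fΛ) = fΛ`. -/
theorem stmt1 (p : ℕ) [Fact p.Prime] (K : Type*) [Field K]
    [Algebra ℚ_[p] K] [FiniteDimensional ℚ_[p] K]
    [Algebra ℤ_[p] K] [IsScalarTower ℤ_[p] ℚ_[p] K]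
    (Λ : Type*) [CommRing Λ]
    (e : Λ ≃+* PowerSeries (integralClosure ℤ_[p] K))
    (f : Λ) (hf : f ≠ 0)
    (A : Ideal Λ) (hfA : Ideal.span {f} ≤ A) (hfin : Finite (Λ ⧸ A)) :
    (∀ (𝔭 : Ideal Λ) [𝔭.IsPrime], 𝔭 ≠ ⊥ →
        (∀ q : Ideal Λ, q.IsPrime → q < 𝔭 → q = ⊥) →
        Nonempty
          ((LocalizedModule 𝔭.primeCompl
              (↥A ⧸ (Submodule.comap A.subtype (Ideal.span {f})))) ≃ₗ[Λ]
            (LocalizedModule 𝔭.primeCompl (Λ ⧸ Ideal.span {f})))) ∧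
      fittingIdeal Λ (↥A ⧸ (Submodule.comap A.subtype (Ideal.span {f}))) =
        Ideal.span {f} := by
  have := pid_integers p K
  have : CharZero K := charZero_of_injective_algebraMap (algebraMap ℚ_[p] K).injective
  exact stmt_of_powerSeries e f hf A hfA hfin
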